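/- Let μ be the standard Gaussian measure N(0, I) on ℝⁿ with density h. Then lim_{δ → +∞} ∫_{ℝⁿ} (x₁ cos θ + x₂ sin θ) · f*_δ(x) dx = cos θ · E[N_{λ:λ}], where N_{λ:λ} denotes the maximum of λ i.i.d. standard normal random variables; in particular this limit is strictly positive. -/

import Mathlib

/-!
Since `h` is the product of one-dimensional standard normal densities, `μ` is the product measure
`γ^{⊗(m+2)}` with `γ = gaussianReal 0 1` (`pi_gaussian_eq_withDensity`,
`gaussian_density_eq_prod`), and the drift is the `μ`-integral of `g` times the weight
`W_δ(x) = λ 1_{L_δ}(x) μ({y₁ < x₁} ∩ L_δ)^{λ-1} / μ(L_δ)^λ`.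

The sets `L_δ` increase to the whole space, so `W_δ(x) → λ Φ(x₁)^{λ-1}` with `Φ(t) = γ(Iio t)`, and
once `μ(L_δ) > 1/2` the weight is at most `λ 2^λ`. As `g` is integrable, dominated convergence gives
the limit `∫ g(x) λ Φ(x₁)^{λ-1} dμ`. Here the `x₂` term vanishes by independence and centring
(`integral_limit_eq`), leaving `cos θ · λ ∫ t Φ(t)^{λ-1} dγ`. This last quantity is the expected
maximum: almost surely exactly one coordinate is the strict maximum, and conditioning on its value
`t` gives the factor `Φ(t)^{λ-1}` for the others (`integral_iSup_eq`). Positivity is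
`integral_iSup_pos`.
-/

open MeasureTheory ProbabilityTheory Real Set Filter

/-- The constraint function `g(x) = x₁ cos θ + x₂ sin θ` on `ℝⁿ` with `n = m + 2 ≥ 2`. -/
noncomputable def constraintG (m : ℕ) (θ : ℝ) (x : Fin (m + 2) → ℝ) : ℝ :=
  x 0 * Real.cos θ + x 1 * Real.sin θ

/-- `L_δ = {x ∈ ℝⁿ : g(x) ≤ δ}`. -/
noncomputable def Lset (m : ℕ) (θ δ : ℝ) : Set (Fin (m + 2) → ℝ) :=
  {x | constraintG m θ x ≤ δ}

/-- The density of the selected step: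
`f*_δ(x) = λ h(x) 1_{L_δ}(x) μ(((−∞,x₁)×ℝ^{n−1}) ∩ L_δ)^{λ−1} / μ(L_δ)^λ`. -/
noncomputable def selectedDensity (m : ℕ) (θ : ℝ) (h : (Fin (m + 2) → ℝ) → ℝ)
    (μ : Measure (Fin (m + 2) → ℝ)) (lam : ℕ) (δ : ℝ) (x : Fin (m + 2) → ℝ) : ℝ :=
  (Lset m θ δ).indicator
    (fun x =>
      (lam : ℝ) * h x * ((μ ({y | y 0 < x 0} ∩ Lset m θ δ)).toReal) ^ (lam - 1)
        / ((μ (Lset m θ δ)).toReal) ^ lam) x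

lemma pi_gaussian_eq_withDensity (n : ℕ) :
    Measure.pi (fun _ : Fin n => gaussianReal 0 1) =
      volume.withDensity (fun x => ENNReal.ofReal (∏ i, gaussianPDFReal 0 1 (x i))) := by
  refine Measure.pi_eq fun s hs => ?_
  have hind : ∀ x : Fin n → ℝ, (Set.univ.pi s).indicator
      (fun x => ∏ i, gaussianPDFReal 0 1 (x i)) x =
        ∏ i, (s i).indicator (gaussianPDFReal 0 1) (x i) := by
    intro x
    by_cases hx : x ∈ Set.univ.pi s
    · rw [indicator_of_mem hx]
      exact Finset.prod_congr rfl fun i _ => (indicator_of_mem (hx i (mem_univ i)) _).symm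
    · rw [indicator_of_notMem hx]
      simp only [Set.mem_pi, mem_univ, true_implies, not_forall] at hx
      obtain ⟨i, hi⟩ := hx
      exact (Finset.prod_eq_zero (Finset.mem_univ i) (indicator_of_notMem hi _)).symm
  have hint : ∀ i, Integrable ((s i).indicator (gaussianPDFReal 0 1)) :=
    fun i => (integrable_gaussianPDFReal 0 1).indicator (hs i)
  have hnn : ∀ i y, 0 ≤ (s i).indicator (gaussianPDFReal 0 1) y :=
    fun i y => indicator_nonneg (fun y _ => gaussianPDFReal_nonneg 0 1 y) y
  rw [withDensity_apply _ (MeasurableSet.univ_pi hs), ← lintegral_indicator (MeasurableSet.univ_pi hs)]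
  have : ∀ x : Fin n → ℝ, (Set.univ.pi s).indicator
      (fun x => ENNReal.ofReal (∏ i, gaussianPDFReal 0 1 (x i))) x =
        ENNReal.ofReal (∏ i, (s i).indicator (gaussianPDFReal 0 1) (x i)) := by
    intro x
    rw [← hind x]
    by_cases hx : x ∈ Set.univ.pi s <;>
      simp only [indicator_of_mem, indicator_of_notMem, hx, not_false_eq_true, ENNReal.ofReal_zero]
  simp_rw [this]
  rw [← ofReal_integral_eq_lintegral_ofReal]
  · rw [integral_fintype_prod_volume_eq_prod (fun i => (s i).indicator (gaussianPDFReal 0 1)),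
      ENNReal.ofReal_prod_of_nonneg fun i _ => integral_nonneg (hnn i)]
    refine Finset.prod_congr rfl fun i _ => ?_
    rw [gaussianReal_apply_eq_integral 0 one_ne_zero, integral_indicator (hs i)]
  · exact Integrable.fintype_prod (f := fun i => (s i).indicator (gaussianPDFReal 0 1)) hint
  · exact ae_of_all _ fun x => Finset.prod_nonneg fun i _ => hnn i (x i)

lemma gaussian_density_eq_prod (n : ℕ) (x : Fin n → ℝ) :
    (2 * π) ^ (-((n : ℝ) / 2)) * Real.exp (-(∑ i, (x i) ^ 2) / 2) =
      ∏ i, gaussianPDFReal 0 1 (x i) := by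
  simp only [gaussianPDFReal, NNReal.coe_one, mul_one, sub_zero, Finset.prod_mul_distrib,
    Finset.prod_const, Finset.card_univ, Fintype.card_fin, ← Real.exp_sum]
  congr 1
  · rw [Real.sqrt_eq_rpow, ← Real.rpow_neg (by positivity), ← Real.rpow_natCast,
      ← Real.rpow_mul (by positivity)]
    congr 1; ring
  · rw [← Finset.sum_div, Finset.sum_neg_distrib]

/-- Two distinct coordinates almost surely differ: the law is absolutely continuous and the hyperplane
`z i = z j` is Lebesgue-null. -/
lemma pi_gaussian_eval_ne (n : ℕ) {i j : Fin n} (hij : i ≠ j) :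
    ∀ᵐ z ∂(Measure.pi fun _ : Fin n => gaussianReal 0 1), z i ≠ z j := by
  have hac : Measure.pi (fun _ : Fin n => gaussianReal 0 1) ≪ volume := by
    rw [pi_gaussian_eq_withDensity]
    exact withDensity_absolutelyContinuous _ _
  refine hac.ae_le ?_
  let S : Submodule ℝ (Fin n → ℝ) :=
    LinearMap.ker (LinearMap.proj (R := ℝ) (φ := fun _ : Fin n => ℝ) i - LinearMap.proj j)
  have hS : S ≠ ⊤ := by
    intro h
    have : (Pi.single i 1 : Fin n → ℝ) ∈ S := h ▸ Submodule.mem_top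
    simp [S, hij.symm] at this
  have h0 := Measure.addHaar_submodule volume S hS
  change _ ∈ ae volume
  rw [mem_ae_iff]
  refine measure_mono_null (fun z hz => ?_) h0
  simpa [S, sub_eq_zero] using hz

lemma integrable_gaussian_eval (n : ℕ) (i : Fin n) :
    Integrable (fun z : Fin n → ℝ => z i) (Measure.pi fun _ : Fin n => gaussianReal 0 1) := by
  have h1 : Integrable (id : ℝ → ℝ) (gaussianReal 0 1) :=
    (memLp_id_gaussianReal (μ := 0) (v := 1) 1).integrable le_rfl
  exact (measurePreserving_eval (fun _ : Fin n => gaussianReal 0 1) i).integrable_comp_of_integrable h1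

lemma integral_gaussian_eval (n : ℕ) (i : Fin n) :
    ∫ z : Fin n → ℝ, z i ∂(Measure.pi fun _ : Fin n => gaussianReal 0 1) = 0 := by
  have hp := measurePreserving_eval (fun _ : Fin n => gaussianReal 0 1) i
  have := integral_map (μ := Measure.pi fun _ : Fin n => gaussianReal 0 1) (f := fun x : ℝ => x)
    hp.measurable.aemeasurable (by fun_prop)
  rw [hp.map_eq, integral_id_gaussianReal] at this
  exact this.symm

lemma integrable_iSup (n : ℕ) :
    Integrable (fun z : Fin n → ℝ => ⨆ i, z i) (Measure.pi fun _ : Fin n => gaussianReal 0 1) := by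
  refine Integrable.mono' (integrable_finsetSum Finset.univ fun i _ => (integrable_gaussian_eval n i).abs)
    (Measurable.iSup fun i => measurable_pi_apply i).aestronglyMeasurable
    (ae_of_all _ fun z => ?_)
  rcases isEmpty_or_nonempty (Fin n) with he | he
  · simp [Real.iSup_of_isEmpty]
  · obtain ⟨i, hi⟩ := exists_eq_ciSup_of_finite (f := z)
    rw [← hi, Real.norm_eq_abs]
    exact Finset.single_le_sum (f := fun i => |z i|) (fun j _ => abs_nonneg _) (Finset.mem_univ i)

/-- If the expected maximum were nonpositive, it would not exceed the mean `0` of any coordinate, so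
every coordinate would almost surely equal the maximum; but two coordinates almost surely differ. -/
lemma integral_iSup_pos (n : ℕ) (hn : 2 ≤ n) :
    0 < ∫ z : Fin n → ℝ, (⨆ i, z i) ∂(Measure.pi fun _ : Fin n => gaussianReal 0 1) := by
  by_contra! hle
  have key : ∀ i : Fin n, ∀ᵐ z ∂(Measure.pi fun _ : Fin n => gaussianReal 0 1),
      (⨆ j, z j) = z i := by
    intro i
    have hnn : ∀ z : Fin n → ℝ, 0 ≤ (⨆ j, z j) - z i := fun z =>
      sub_nonneg.2 (le_ciSup (Set.finite_range z).bddAbove i)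
    have hI := (integrable_iSup n).sub (integrable_gaussian_eval n i)
    have h0 : ∫ z : Fin n → ℝ, ((⨆ j, z j) - z i)
        ∂(Measure.pi fun _ : Fin n => gaussianReal 0 1) = 0 := by
      refine le_antisymm ?_ (integral_nonneg hnn)
      rw [integral_sub (integrable_iSup n) (integrable_gaussian_eval n i), integral_gaussian_eval]
      simpa using hle
    filter_upwards [(integral_eq_zero_iff_of_nonneg hnn hI).1 h0] with z hz
    exact sub_eq_zero.1 hz
  have hij : (⟨0, by omega⟩ : Fin n) ≠ ⟨1, by omega⟩ := by simp
  have : ∀ᵐ z ∂(Measure.pi fun _ : Fin n => gaussianReal 0 1), False := by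
    filter_upwards [key ⟨0, by omega⟩, key ⟨1, by omega⟩, pi_gaussian_eval_ne n hij]
      with z h1 h2 h3 using h3 (h1.symm.trans h2)
  simpa using this.exists

lemma iSup_eq_sum (k : ℕ) (z : Fin (k + 1) → ℝ) (hz : Function.Injective z) :
    (⨆ i, z i) = ∑ i, {w : Fin (k + 1) → ℝ | ∀ j, w (i.succAbove j) < w i}.indicator
      (fun w => w i) z := by
  obtain ⟨i, hi⟩ := exists_eq_ciSup_of_finite (f := z)
  have hmax : ∀ j, z j ≤ z i := fun j => hi ▸ le_ciSup (Set.finite_range z).bddAbove j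
  rw [← hi, Finset.sum_eq_single i]
  · rw [indicator_of_mem]
    intro j
    exact lt_of_le_of_ne (hmax _) fun h => Fin.succAbove_ne i j (hz h)
  · intro l _ hl
    refine indicator_of_notMem (fun h => ?_) _
    obtain ⟨j, hj⟩ := Fin.exists_succAbove_eq hl.symm
    have := h j
    rw [hj] at this
    exact absurd this (not_lt.2 (hmax l))
  · simp

/-- The expected maximum of `k + 1` standard normals through the density `(k + 1) φ Φᵏ`: split according
to the coordinate attaining the maximum, and integrate out the `k` others. -/
lemma integral_iSup_eq (k : ℕ) :
    ∫ z : Fin (k + 1) → ℝ, (⨆ i, z i) ∂(Measure.pi fun _ : Fin (k + 1) => gaussianReal 0 1) =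
      ((k + 1 : ℕ) : ℝ) * ∫ x, x * ((gaussianReal 0 1).real (Iio x)) ^ k ∂(gaussianReal 0 1) := by
  have hinj : ∀ᵐ z ∂(Measure.pi fun _ : Fin (k + 1) => gaussianReal 0 1),
      Function.Injective z := by
    have : ∀ᵐ z ∂(Measure.pi fun _ : Fin (k + 1) => gaussianReal 0 1),
        ∀ i j, i ≠ j → z i ≠ z j := by
      simp_rw [ae_all_iff]
      exact fun i j hij => pi_gaussian_eval_ne _ hij
    filter_upwards [this] with z hz i j hij
    by_contra h
    exact hz i j h hij
  have hmeas : ∀ i : Fin (k + 1), MeasurableSet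
      {w : Fin (k + 1) → ℝ | ∀ j, w (i.succAbove j) < w i} := by
    intro i
    rw [ofPred_forall]
    exact MeasurableSet.iInter fun j =>
      measurableSet_lt (measurable_pi_apply _) (measurable_pi_apply _)
  rw [integral_congr_ae (hinj.mono fun z hz => iSup_eq_sum k z hz),
    integral_finsetSum _ fun i _ => (integrable_gaussian_eval (k + 1) i).indicator (hmeas i)]
  have hterm : ∀ i : Fin (k + 1),
      ∫ z, {w : Fin (k + 1) → ℝ | ∀ j, w (i.succAbove j) < w i}.indicator (fun w => w i) z
        ∂(Measure.pi fun _ : Fin (k + 1) => gaussianReal 0 1) =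
      ∫ x, x * ((gaussianReal 0 1).real (Iio x)) ^ k ∂(gaussianReal 0 1) := by
    intro i
    have hp := measurePreserving_piFinSuccAbove (fun _ : Fin (k + 1) => gaussianReal 0 1) i
    let F : ℝ × (Fin k → ℝ) → ℝ := {p | ∀ j, p.2 j < p.1}.indicator (fun p => p.1)
    have hF : ∀ z : Fin (k + 1) → ℝ,
        {w : Fin (k + 1) → ℝ | ∀ j, w (i.succAbove j) < w i}.indicator (fun w => w i) z =
          F (MeasurableEquiv.piFinSuccAbove (fun _ => ℝ) i z) := by
      intro z
      rfl
    have hS : MeasurableSet {p : ℝ × (Fin k → ℝ) | ∀ j, p.2 j < p.1} := by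
      rw [ofPred_forall]
      exact MeasurableSet.iInter fun j => measurableSet_lt (by fun_prop) (by fun_prop)
    have hFi : Integrable F ((gaussianReal 0 1).prod (Measure.pi fun _ : Fin k => gaussianReal 0 1)) := by
      refine Integrable.indicator ?_ hS
      have h1 : Integrable (id : ℝ → ℝ) (gaussianReal 0 1) :=
        (memLp_id_gaussianReal (μ := 0) (v := 1) 1).integrable le_rfl
      exact h1.comp_fst _
    simp_rw [hF]
    rw [hp.integral_comp (MeasurableEquiv.measurableEmbedding _) F, integral_prod F hFi]
    refine integral_congr_ae (ae_of_all _ fun x => ?_)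
    have hFx : (fun y => F (x, y)) = (Set.univ.pi fun _ : Fin k => Iio x).indicator fun _ => x := by
      funext y
      simp only [F, indicator, mem_ofPred_eq, Set.mem_pi, mem_univ, true_implies, mem_Iio]
    simp only [hFx]
    rw [integral_indicator_const _ (MeasurableSet.univ_pi fun _ => measurableSet_Iio),
      measureReal_def, Measure.pi_pi]
    simp [measureReal_def, mul_comm]
  simp [hterm]

lemma measurable_constraintG (m : ℕ) (θ : ℝ) : Measurable (constraintG m θ) := by
  unfold constraintG
  fun_prop

lemma measurableSet_Lset (m : ℕ) (θ δ : ℝ) : MeasurableSet (Lset m θ δ) :=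
  measurable_constraintG m θ measurableSet_Iic

lemma tendsto_measureReal_inter_Lset (m : ℕ) (θ : ℝ) (μ : Measure (Fin (m + 2) → ℝ))
    [IsProbabilityMeasure μ] (A : Set (Fin (m + 2) → ℝ)) :
    Tendsto (fun δ => μ.real (A ∩ Lset m θ δ)) atTop (nhds (μ.real A)) := by
  have hmono : Monotone fun δ => A ∩ Lset m θ δ := fun a b hab x hx =>
    ⟨hx.1, le_trans hx.2 hab⟩
  have hU : ⋃ δ, A ∩ Lset m θ δ = A := by
    rw [← inter_iUnion]
    exact inter_eq_left.2 fun x _ => mem_iUnion.2 ⟨constraintG m θ x, le_refl (constraintG m θ x)⟩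
  have := tendsto_measure_iUnion_atTop (μ := μ) hmono
  rw [hU] at this
  exact (ENNReal.tendsto_toReal (measure_ne_top μ A)).comp this

/-- The integral obtained at `δ = ∞`: there the weight depends on `x 0` only, so the `x 1` term vanishes
by independence and centring. -/
lemma integral_limit_eq (m k : ℕ) (θ : ℝ) :
    ∫ x, constraintG m θ x * (((k + 1 : ℕ) : ℝ) * ((gaussianReal 0 1).real (Iio (x 0))) ^ k)
      ∂(Measure.pi fun _ : Fin (m + 2) => gaussianReal 0 1) =
    Real.cos θ * ∫ z : Fin (k + 1) → ℝ, (⨆ i, z i)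
      ∂(Measure.pi fun _ : Fin (k + 1) => gaussianReal 0 1) := by
  rw [integral_iSup_eq]
  set P := Measure.pi fun _ : Fin (m + 2) => gaussianReal 0 1
  set Φ : ℝ → ℝ := fun t => ((gaussianReal 0 1).real (Iio t)) ^ k
  have hΦm : Measurable Φ := by
    have : Monotone fun t : ℝ => (gaussianReal 0 1).real (Iio t) := fun a b hab =>
      measureReal_mono (Iio_subset_Iio hab)
    exact this.measurable.pow_const k
  have hΦb : ∀ t, ‖Φ t‖ ≤ 1 := fun t => by
    rw [Real.norm_of_nonneg (by positivity)]
    exact pow_le_one₀ measureReal_nonneg measureReal_le_one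
  have hi : ∀ i : Fin (m + 2), Integrable (fun x => x i * Φ (x 0)) P := fun i =>
    (integrable_gaussian_eval (m + 2) i).mul_bdd (c := 1)
      (hΦm.comp (measurable_pi_apply 0)).aestronglyMeasurable (ae_of_all _ fun x => hΦb (x 0))
  have h0 : ∫ x, x 0 * Φ (x 0) ∂P = ∫ t, t * Φ t ∂(gaussianReal 0 1) := by
    have hp := measurePreserving_eval (fun _ : Fin (m + 2) => gaussianReal 0 1) 0
    have hmap := integral_map (μ := P) (f := fun t => t * Φ t) hp.measurable.aemeasurable
      (measurable_id.mul hΦm).aestronglyMeasurable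
    rw [hp.map_eq] at hmap
    exact hmap.symm
  have h1 : ∫ x, x 1 * Φ (x 0) ∂P = 0 := by
    have hind := iIndepFun_pi (μ := fun _ : Fin (m + 2) => gaussianReal 0 1)
      (X := fun _ (t : ℝ) => t) fun i => aemeasurable_id
    have h10 : IndepFun (fun x : Fin (m + 2) → ℝ => x 1) (fun x => Φ (x 0)) P :=
      (hind.indepFun (i := 1) (j := 0) (by simp)).comp measurable_id hΦm
    rw [h10.integral_fun_mul_eq_mul_integral (measurable_pi_apply 1).aestronglyMeasurable
      (hΦm.comp (measurable_pi_apply 0)).aestronglyMeasurable, integral_gaussian_eval, zero_mul]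
  have hsplit : ∀ x : Fin (m + 2) → ℝ, constraintG m θ x * (((k + 1 : ℕ) : ℝ) * Φ (x 0)) =
      (Real.cos θ * ((k + 1 : ℕ) : ℝ)) * (x 0 * Φ (x 0)) +
        (Real.sin θ * ((k + 1 : ℕ) : ℝ)) * (x 1 * Φ (x 0)) := by
    intro x
    unfold constraintG
    ring
  calc _ = ∫ x, ((Real.cos θ * ((k + 1 : ℕ) : ℝ)) * (x 0 * Φ (x 0)) +
        (Real.sin θ * ((k + 1 : ℕ) : ℝ)) * (x 1 * Φ (x 0))) ∂P :=
        integral_congr_ae (ae_of_all _ hsplit)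
    _ = _ := by
        rw [integral_add ((hi 0).const_mul _) ((hi 1).const_mul _), integral_const_mul,
          integral_const_mul, h0, h1]
        ring

/-- for standard Gaussian steps `μ = N(0, I)` with density `h`,
`∫ g(x) f*_δ(x) dx → cos θ · E[N_{λ:λ}]` as `δ → +∞`, where `N_{λ:λ}` is the maximum of
`λ` i.i.d. standard normal random variables; in particular the limit is positive. -/
theorem gaussian_drift_limit
    {m lam : ℕ} (hlam : 2 ≤ lam) (θ : ℝ) (hθ : θ ∈ Set.Ioo 0 (π / 2))
    (h : (Fin (m + 2) → ℝ) → ℝ)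
    (hdef : ∀ x, h x = (2 * π) ^ (-(((m : ℝ) + 2) / 2)) * Real.exp (-(∑ i, (x i) ^ 2) / 2))
    (μ : Measure (Fin (m + 2) → ℝ)) [IsProbabilityMeasure μ]
    (hμ : μ = volume.withDensity fun x => ENNReal.ofReal (h x))
    (Emax : ℝ)
    (hEmax : Emax = ∫ z : Fin lam → ℝ, (⨆ i : Fin lam, z i)
      ∂(Measure.pi fun _ : Fin lam => gaussianReal 0 1)) :
    Tendsto (fun δ : ℝ => ∫ x, constraintG m θ x * selectedDensity m θ h μ lam δ x) atTop
      (nhds (Real.cos θ * Emax)) ∧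
    0 < Real.cos θ * Emax := by
  have hcos : 0 < Real.cos θ :=
    Real.cos_pos_of_mem_Ioo ⟨by linarith [hθ.1, Real.pi_pos], hθ.2⟩
  refine ⟨?_, mul_pos hcos (hEmax ▸ integral_iSup_pos lam hlam)⟩
  obtain ⟨k, rfl⟩ : ∃ k, lam = k + 1 := ⟨lam - 1, by omega⟩
  have hprod : ∀ x, h x = ∏ i, gaussianPDFReal 0 1 (x i) := fun x => by
    rw [hdef, ← gaussian_density_eq_prod (m + 2) x]
    push_cast
    rfl
  have hpi : μ = Measure.pi fun _ : Fin (m + 2) => gaussianReal 0 1 := by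
    rw [hμ, pi_gaussian_eq_withDensity]
    simp_rw [hprod]
  have hnn : ∀ x, 0 ≤ h x := fun x => by
    rw [hdef]
    positivity
  have hmeas : Measurable h := by
    rw [funext hdef]
    fun_prop
  let W : ℝ → (Fin (m + 2) → ℝ) → ℝ := fun δ => (Lset m θ δ).indicator fun x =>
    ((k + 1 : ℕ) : ℝ) * (μ.real ({y | y 0 < x 0} ∩ Lset m θ δ)) ^ k / (μ.real (Lset m θ δ)) ^ (k + 1)
  have hint : ∀ δ, ∫ x, constraintG m θ x * selectedDensity m θ h μ (k + 1) δ x =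
      ∫ x, constraintG m θ x * W δ x ∂μ := by
    intro δ
    have := integral_withDensity_eq_integral_toReal_smul (μ := volume)
      (f := fun x => ENNReal.ofReal (h x)) hmeas.ennreal_ofReal
      (ae_of_all _ fun x => ENNReal.ofReal_lt_top) (fun x => constraintG m θ x * W δ x)
    rw [← hμ] at this
    rw [this]
    refine integral_congr_ae (ae_of_all _ fun x => ?_)
    by_cases hx : x ∈ Lset m θ δ
    · simp only [selectedDensity, W, indicator_of_mem hx, ENNReal.toReal_ofReal (hnn x),
        smul_eq_mul, measureReal_def, Nat.add_sub_cancel]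
      ring
    · simp [selectedDensity, W, indicator_of_notMem hx]
  simp_rw [hint]
  have hIio : ∀ t : ℝ, μ.real {y | y 0 < t} = (gaussianReal 0 1).real (Iio t) := by
    intro t
    have hp := measurePreserving_eval (fun _ : Fin (m + 2) => gaussianReal 0 1) 0
    rw [hpi, measureReal_def, measureReal_def, ← hp.measure_preimage measurableSet_Iio.nullMeasurableSet]
    rfl
  have hL : Tendsto (fun δ => μ.real (Lset m θ δ)) atTop (nhds 1) := by
    simpa using tendsto_measureReal_inter_Lset m θ μ univ
  have hlim := integral_limit_eq m k θ
  rw [← hEmax, ← hpi] at hlim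
  rw [← hlim]
  have hgi : Integrable (constraintG m θ) μ := by
    rw [hpi]
    exact ((integrable_gaussian_eval (m + 2) 0).mul_const _).add ((integrable_gaussian_eval (m + 2) 1).mul_const _)
  refine tendsto_integral_filter_of_dominated_convergence
    (fun x => |constraintG m θ x| * (((k + 1 : ℕ) : ℝ) * 2 ^ (k + 1))) ?_ ?_
    (hgi.abs.mul_const _) ?_
  · refine Eventually.of_forall fun δ => Measurable.aestronglyMeasurable ?_
    refine (measurable_constraintG m θ).mul (Measurable.indicator ?_ (measurableSet_Lset m θ δ))
    have hmono : Monotone fun t : ℝ => μ.real ({y | y 0 < t} ∩ Lset m θ δ) := fun a b hab =>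
      measureReal_mono (inter_subset_inter_left _ fun y (hy : y 0 < a) => hy.trans_le hab)
    exact (((hmono.measurable.comp (measurable_pi_apply 0)).pow_const k).const_mul _).div_const _
  -- once `μ(L_δ) > 1/2`, the normalising factor `μ(L_δ)^{-λ}` is at most `2^λ`
  · filter_upwards [hL.eventually (lt_mem_nhds (by norm_num : (1 / 2 : ℝ) < 1))] with δ hδ
    refine ae_of_all _ fun x => ?_
    rw [norm_mul, Real.norm_eq_abs]
    refine mul_le_mul_of_nonneg_left ?_ (abs_nonneg _)
    refine (norm_indicator_le_norm_self _ x).trans ?_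
    rw [Real.norm_of_nonneg (by positivity), div_le_iff₀ (by positivity), mul_assoc, ← mul_pow]
    refine mul_le_mul_of_nonneg_left ?_ (by positivity)
    exact (pow_le_one₀ measureReal_nonneg measureReal_le_one).trans
      (one_le_pow₀ (by linarith))
  · refine ae_of_all _ fun x => Tendsto.const_mul _ ?_
    have h1 : Tendsto (fun δ => ((k + 1 : ℕ) : ℝ) * (μ.real ({y | y 0 < x 0} ∩ Lset m θ δ)) ^ k /
        (μ.real (Lset m θ δ)) ^ (k + 1)) atTop
        (nhds (((k + 1 : ℕ) : ℝ) * ((gaussianReal 0 1).real (Iio (x 0))) ^ k)) := by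
      have := (((tendsto_measureReal_inter_Lset m θ μ {y | y 0 < x 0}).pow k).const_mul
        ((k + 1 : ℕ) : ℝ)).div (hL.pow (k + 1)) (by simp)
      rw [hIio] at this
      rw [one_pow, div_one] at this
      exact this
    refine h1.congr' ?_
    filter_upwards [eventually_ge_atTop (constraintG m θ x)] with δ hδ
    simp only [W, indicator_of_mem (show x ∈ Lset m θ δ from hδ)]
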